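/- arXiv:1803.04174 — 5 statements merged into one kernel-verified Lean document; each statement's English description precedes it below -/
import Mathlib

section
/- Let p_1 < p_2 < ... < p_n be positive real numbers and let B be the n×n matrix with (i,j) entry (p_i + p_j)^(p_i + p_j). Then for every real number r > 0, the entrywise power B^{∘r}, i.e. the matrix with (i,j) entry (p_i + p_j)^{(p_i + p_j) r}, is positive semidefinite. (In other words, B is infinitely divisible.) -/
/-!
Let `K(p, q) = (p + q) log (p + q) - p log p - q log q`. Then `(p + q) ^ ((p + q) * r)` equals
`exp (r K(p, q))` times the rank-one kernel `p ^ (p * r) * q ^ (q * r)`. Since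
`∫ t in Ioi 0, (1 - exp (-(p * t))) / t * ((1 - exp (-(q * t))) / t) = K(p, q)`, the kernel `K` is
a Gram kernel in `L²(0, ∞)`. Entrywise powers, nonnegative combinations and limits of positive
semidefinite matrices are positive semidefinite, so `exp (r K)` is positive semidefinite too, and
the Schur product theorem concludes. The integral is evaluated by integration by parts, which
reduces it to two Frullani integrals.
-/

open Filter MeasureTheory Real Set Topology
open scoped InnerProductSpace Matrix Nat

section PosSemidef

open scoped ComplexOrder

variable {ι : Type*}

lemma posSemidef_of_forall_finset_submatrix {R : Type*} [Ring R] [PartialOrder R] [StarRing R]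
    {A : Matrix ι ι R} (hA : ∀ s : Finset ι, (A.submatrix ((↑) : s → ι) (↑)).PosSemidef) :
    A.PosSemidef := by
  classical
  refine ⟨Matrix.IsHermitian.ext fun i j => ?_, fun x => ?_⟩
  · exact (hA {i, j}).isHermitian.apply ⟨i, by simp⟩ ⟨j, by simp⟩
  · simpa [Finsupp.sum, ← Finset.sum_attach x.support, ← Finset.subtype_mem_eq_attach,
      ← Finsupp.subtypeDomain_apply, ← Finsupp.support_subtypeDomain]
      using (hA x.support).2 (x.subtypeDomain (· ∈ x.support))

lemma isClosed_setOf_posSemidef {R : Type*} [Ring R] [PartialOrder R] [StarRing R]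
    [TopologicalSpace R] [IsTopologicalRing R] [ContinuousStar R] [OrderClosedTopology R] :
    IsClosed {A : Matrix ι ι R | A.PosSemidef} := by
  have hermitian : IsClosed {A : Matrix ι ι R | A.IsHermitian} :=
    isClosed_eq (by fun_prop) continuous_id
  have nonneg (x : ι →₀ R) : IsClosed {A : Matrix ι ι R |
      0 ≤ x.sum fun i xi => x.sum fun j xj => star xi * A i j * xj} :=
    isClosed_le continuous_const (by unfold Finsupp.sum; fun_prop)
  simpa only [Matrix.PosSemidef, ofPred_and, ofPred_forall] using
    hermitian.inter (isClosed_iInter nonneg)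

variable {𝕜 : Type*} [RCLike 𝕜]

lemma posSemidef_vecMulVec_star (a : ι → 𝕜) : (Matrix.vecMulVec a (star a)).PosSemidef :=
  posSemidef_of_forall_finset_submatrix fun s =>
    Matrix.posSemidef_vecMulVec_self_star fun i : s => a i

lemma posSemidef_integral_inner {α E : Type*} [MeasurableSpace α] {μ : Measure α}
    [NormedAddCommGroup E] [InnerProductSpace 𝕜 E] {f : ι → α → E} (hf : ∀ i, MemLp (f i) 2 μ) :
    (Matrix.of fun i j => ∫ x, ⟪f i x, f j x⟫_𝕜 ∂μ).PosSemidef := by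
  have eq_gram : (Matrix.of fun i j => ∫ x, ⟪f i x, f j x⟫_𝕜 ∂μ) =
      Matrix.gram 𝕜 fun i => (hf i).toLp (f i) := by
    ext i j
    rw [Matrix.gram_apply, L2.inner_def]
    refine integral_congr_ae ?_
    filter_upwards [(hf i).coeFn_toLp, (hf j).coeFn_toLp] with x hi hj
    rw [hi, hj]
  rw [eq_gram]
  exact posSemidef_of_forall_finset_submatrix fun s =>
    Matrix.posSemidef_gram 𝕜 fun i : s => (hf i).toLp (f i)

lemma posSemidef_map_pow {A : Matrix ι ι 𝕜} (hA : A.PosSemidef) (k : ℕ) :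
    (A.map (· ^ k)).PosSemidef := by
  induction k with
  | zero =>
    convert posSemidef_vecMulVec_star (1 : ι → 𝕜)
    ext i j
    simp [Matrix.vecMulVec_apply]
  | succ k ih =>
    convert ih.hadamard hA
    ext i j
    simp [pow_succ]

lemma posSemidef_map_exp {A : Matrix ι ι 𝕜} (hA : A.PosSemidef) :
    (A.map NormedSpace.exp).PosSemidef := by
  have expansion : HasSum (fun k : ℕ => (k !⁻¹ : 𝕜) • A.map (· ^ k)) (A.map NormedSpace.exp) :=
    Pi.hasSum.2 fun i => Pi.hasSum.2 fun j => NormedSpace.exp_series_hasSum_exp' (𝕂 := 𝕜) (A i j)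
  have partialSum (s : Finset ℕ) : (∑ k ∈ s, (k !⁻¹ : 𝕜) • A.map (· ^ k)).PosSemidef :=
    Matrix.posSemidef_sum s fun k _ =>
      (posSemidef_map_pow hA k).smul (inv_nonneg.2 (Nat.cast_nonneg _))
  exact isClosed_setOf_posSemidef.mem_of_tendsto expansion (.of_forall partialSum)

end PosSemidef

/-- The Laplace transform `t ↦ ∫ s in 0..p, exp (-(t * s))` of the indicator function of `[0, p]`,
in closed form. At `t = 0` it takes the junk value `0` instead of `p`; only `t > 0` matters. -/
noncomputable def laplaceIndicator (p t : ℝ) : ℝ := (1 - exp (-(p * t))) / t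

/-- The failure of additivity of `x ↦ x * log x`, which is the `L²(0, ∞)` inner product of
`laplaceIndicator p` and `laplaceIndicator q`. -/
noncomputable def mulLogDefect (p q : ℝ) : ℝ := (p + q) * log (p + q) - p * log p - q * log q

section LaplaceIndicator

variable {p q t : ℝ}

lemma mul_laplaceIndicator (ht : t ≠ 0) : t * laplaceIndicator p t = 1 - exp (-(p * t)) :=
  mul_div_cancel₀ _ ht

lemma laplaceIndicator_nonneg (hp : 0 ≤ p) (ht : 0 ≤ t) : 0 ≤ laplaceIndicator p t :=
  div_nonneg (by simpa using mul_nonneg hp ht) ht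

lemma laplaceIndicator_le_self (ht : 0 < t) : laplaceIndicator p t ≤ p := by
  rw [laplaceIndicator, div_le_iff₀ ht]
  linarith [Real.one_sub_le_exp_neg (p * t)]

lemma measurable_laplaceIndicator (p : ℝ) : Measurable (laplaceIndicator p) := by
  unfold laplaceIndicator
  fun_prop

lemma laplaceIndicator_sq_le (hp : 0 ≤ p) (ht : 0 < t) :
    laplaceIndicator p t ^ 2 ≤ (1 + p ^ 2) * (1 + t ^ 2)⁻¹ := by
  have nonneg := laplaceIndicator_nonneg hp ht.le
  have le_self : laplaceIndicator p t ^ 2 ≤ p ^ 2 := by gcongr; exact laplaceIndicator_le_self ht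
  have mul_le_one : (t * laplaceIndicator p t) ^ 2 ≤ 1 := by
    refine pow_le_one₀ (by positivity) ?_
    rw [mul_laplaceIndicator ht.ne']
    linarith [exp_nonneg (-(p * t))]
  rw [← div_eq_mul_inv, le_div_iff₀ (by positivity)]
  linarith

lemma memLp_two_laplaceIndicator (hp : 0 ≤ p) :
    MemLp (laplaceIndicator p) 2 (volume.restrict (Ioi 0)) := by
  have aesm := (measurable_laplaceIndicator p).aestronglyMeasurable (μ := volume.restrict (Ioi 0))
  refine (memLp_two_iff_integrable_sq aesm).2 ?_
  refine (integrable_inv_one_add_sq.const_mul (1 + p ^ 2)).restrict.mono' (aesm.pow 2) ?_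
  filter_upwards [ae_restrict_mem measurableSet_Ioi] with t ht
  rw [Real.norm_of_nonneg (sq_nonneg _)]
  exact laplaceIndicator_sq_le hp ht

lemma integrableOn_exp_mul_laplaceIndicator (hp : 0 < p) (hq : 0 ≤ q) :
    IntegrableOn (fun t => exp (-(p * t)) * laplaceIndicator q t) (Ioi 0) := by
  have exp_integrable : IntegrableOn (fun t => exp (-(p * t))) (Ioi 0) := by
    simpa only [neg_mul] using integrableOn_exp_mul_Ioi (neg_lt_zero.2 hp) 0
  refine exp_integrable.mul_bdd (c := q)
    (measurable_laplaceIndicator q).aestronglyMeasurable ?_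
  filter_upwards [ae_restrict_mem measurableSet_Ioi] with t ht
  rw [Real.norm_of_nonneg (laplaceIndicator_nonneg hq (mem_Ioi.1 ht).le)]
  exact laplaceIndicator_le_self ht

lemma integral_exp_mul_laplaceIndicator (hp : 0 < p) (hq : 0 ≤ q) :
    ∫ t in Ioi 0, exp (-(p * t)) * laplaceIndicator q t = log ((p + q) / p) := by
  have frullani_integrand : (fun t => exp (-(p * t)) * laplaceIndicator q t) =
      fun t => t⁻¹ • (exp (-(p * t)) - exp (-((p + q) * t))) := by
    funext t
    rw [laplaceIndicator, add_mul, neg_add, exp_add, smul_eq_mul]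
    ring
  have integrable := integrableOn_exp_mul_laplaceIndicator hp hq
  rw [frullani_integrand] at integrable ⊢
  have continuous_exp_neg : Continuous fun t : ℝ => exp (-t) := by fun_prop
  rw [Frullani.integral_Ioi_eq (f := fun t => exp (-t)) (L := 1) (R := 0)
    (continuous_exp_neg.locallyIntegrable.locallyIntegrableOn _) hp (by positivity)
    ((continuous_exp_neg.tendsto' 0 1 (by simp)).mono_left nhdsWithin_le_nhds)
    tendsto_exp_neg_atTop_nhds_zero integrable]
  simp

lemma hasDerivAt_laplaceIndicator (p : ℝ) (ht : t ≠ 0) :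
    HasDerivAt (laplaceIndicator p) ((p * exp (-(p * t)) - laplaceIndicator p t) / t) t := by
  have deriv_num : HasDerivAt (fun t => 1 - exp (-(p * t))) (p * exp (-(p * t))) t := by
    simpa [mul_comm] using ((hasDerivAt_id t).const_mul p).neg.exp.const_sub 1
  refine (deriv_num.div (hasDerivAt_id t) ht).congr_deriv ?_
  simp only [laplaceIndicator, id_eq]
  field_simp

lemma hasDerivAt_mul_laplaceIndicator_mul (p q : ℝ) (ht : t ≠ 0) :
    HasDerivAt (fun t => t * (laplaceIndicator p t * laplaceIndicator q t))
      (p * (exp (-(p * t)) * laplaceIndicator q t) +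
        q * (exp (-(q * t)) * laplaceIndicator p t) -
          laplaceIndicator p t * laplaceIndicator q t) t := by
  refine ((hasDerivAt_id t).mul
    ((hasDerivAt_laplaceIndicator p ht).mul (hasDerivAt_laplaceIndicator q ht))).congr_deriv ?_
  simp only [Pi.mul_apply, id_eq]
  field_simp
  ring

lemma tendsto_mul_laplaceIndicator_mul_nhdsGT_zero (hp : 0 ≤ p) (hq : 0 ≤ q) :
    Tendsto (fun t => t * (laplaceIndicator p t * laplaceIndicator q t)) (𝓝[>] 0) (𝓝 0) := by
  have bound_tendsto : Tendsto (fun t : ℝ => t * (p * q)) (𝓝[>] 0) (𝓝 0) :=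
    ((continuous_mul_const (p * q)).tendsto' 0 0 (zero_mul _)).mono_left nhdsWithin_le_nhds
  refine squeeze_zero' ?_ ?_ bound_tendsto <;>
    filter_upwards [self_mem_nhdsWithin] with t (ht : 0 < t)
  · have := laplaceIndicator_nonneg hp ht.le
    have := laplaceIndicator_nonneg hq ht.le
    positivity
  · gcongr
    exacts [laplaceIndicator_nonneg hq ht.le, laplaceIndicator_le_self ht,
      laplaceIndicator_le_self ht]

lemma tendsto_mul_laplaceIndicator_mul_atTop (hp : 0 < p) (hq : 0 < q) :
    Tendsto (fun t => t * (laplaceIndicator p t * laplaceIndicator q t)) atTop (𝓝 0) := by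
  have one_sub_exp {a : ℝ} (ha : 0 < a) :
      Tendsto (fun t => 1 - exp (-(a * t))) atTop (𝓝 1) := by
    simpa using (tendsto_exp_neg_atTop_nhds_zero.comp
      (tendsto_id.const_mul_atTop ha)).const_sub 1
  have limit := ((one_sub_exp hp).mul (one_sub_exp hq)).mul tendsto_inv_atTop_zero
  rw [mul_zero] at limit
  refine limit.congr' ?_
  filter_upwards [eventually_ne_atTop 0] with t ht
  rw [← mul_laplaceIndicator ht, ← mul_laplaceIndicator ht]
  field_simp

lemma integral_laplaceIndicator_mul (hp : 0 < p) (hq : 0 < q) :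
    ∫ t in Ioi 0, laplaceIndicator p t * laplaceIndicator q t = mulLogDefect p q := by
  have integrable_pq := (integrableOn_exp_mul_laplaceIndicator hp hq.le).const_mul p
  have integrable_qp := (integrableOn_exp_mul_laplaceIndicator hq hp.le).const_mul q
  have integrable_mul : IntegrableOn (fun t => laplaceIndicator p t * laplaceIndicator q t)
      (Ioi 0) :=
    (memLp_two_laplaceIndicator hp.le).integrable_mul (memLp_two_laplaceIndicator hq.le)
  have continuousWithinAt_zero : ContinuousWithinAt
      (fun t => t * (laplaceIndicator p t * laplaceIndicator q t)) (Ici 0) 0 := by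
    rw [← continuousWithinAt_Ioi_iff_Ici, ContinuousWithinAt, zero_mul]
    exact tendsto_mul_laplaceIndicator_mul_nhdsGT_zero hp.le hq.le
  have by_parts := integral_Ioi_of_hasDerivAt_of_tendsto continuousWithinAt_zero
    (fun t ht => hasDerivAt_mul_laplaceIndicator_mul p q (ne_of_gt ht))
    ((integrable_pq.fun_add integrable_qp).sub integrable_mul)
    (tendsto_mul_laplaceIndicator_mul_atTop hp hq)
  rw [integral_sub (integrable_pq.fun_add integrable_qp) integrable_mul,
    integral_add integrable_pq integrable_qp, integral_const_mul, integral_const_mul,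
    integral_exp_mul_laplaceIndicator hp hq.le, integral_exp_mul_laplaceIndicator hq hp.le,
    add_comm q p, log_div (by positivity) hp.ne',
    log_div (by positivity) hq.ne'] at by_parts
  unfold mulLogDefect
  linarith

end LaplaceIndicator

lemma add_rpow_add_mul {p q : ℝ} (hp : 0 < p) (hq : 0 < q) (r : ℝ) :
    (p + q) ^ ((p + q) * r) = exp (r * mulLogDefect p q) * (p ^ (p * r) * q ^ (q * r)) := by
  rw [rpow_def_of_pos hp, rpow_def_of_pos hq, rpow_def_of_pos (add_pos hp hq), ← exp_add,
    ← exp_add, mulLogDefect]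
  ring_nf

variable {ι : Type*} {p : ι → ℝ}

lemma posSemidef_mulLogDefect (hp : ∀ i, 0 < p i) :
    (Matrix.of fun i j => mulLogDefect (p i) (p j)).PosSemidef := by
  have gram : (Matrix.of fun i j => mulLogDefect (p i) (p j)) = Matrix.of fun i j =>
      ∫ t in Ioi 0, ⟪laplaceIndicator (p i) t, laplaceIndicator (p j) t⟫_ℝ := by
    ext i j
    simp only [Matrix.of_apply, RCLike.inner_apply', conj_trivial,
      integral_laplaceIndicator_mul (hp i) (hp j)]
  rw [gram]
  exact posSemidef_integral_inner fun i => memLp_two_laplaceIndicator (hp i).le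

theorem stmt_0_general (hp : ∀ i, 0 < p i) {r : ℝ} (hr : 0 ≤ r) :
    (Matrix.of fun i j => (p i + p j) ^ ((p i + p j) * r)).PosSemidef := by
  let K : Matrix ι ι ℝ := Matrix.of fun i j => mulLogDefect (p i) (p j)
  let a (i : ι) : ℝ := p i ^ (p i * r)
  have factorization : (Matrix.of fun i j => (p i + p j) ^ ((p i + p j) * r)) =
      (r • K).map NormedSpace.exp ⊙ Matrix.vecMulVec a (star a) := by
    ext i j
    rw [Matrix.of_apply, add_rpow_add_mul (hp i) (hp j), exp_eq_exp_ℝ]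
    rfl
  have exp_posSemidef : ((r • K).map NormedSpace.exp).PosSemidef :=
    posSemidef_map_exp ((posSemidef_mulLogDefect hp).smul hr)
  rw [factorization]
  exact exp_posSemidef.hadamard (posSemidef_vecMulVec_star a)

/-- Infinite divisibility of the matrix `[(pᵢ + pⱼ)^(pᵢ + pⱼ)]`: every positive
entrywise power is positive semidefinite. -/
theorem stmt_0 (n : ℕ) (p : Fin n → ℝ) (hpos : ∀ i, 0 < p i) (hmono : StrictMono p)
    (r : ℝ) (hr : 0 < r) :
    Matrix.PosSemidef (Matrix.of fun i j : Fin n =>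
      (p i + p j) ^ ((p i + p j) * r)) :=
  stmt_0_general hpos hr.le
end

section
/- Let p_1 < p_2 < ... < p_n be positive real numbers and let B be the n×n matrix with (i,j) entry (p_i + p_j)^(p_i + p_j). Then B is nonsingular, i.e. det B ≠ 0. -/
/-!
Conjugating by the diagonal matrix with entries `pᵢ ^ pᵢ` turns the matrix into the entrywise
exponential of `F (pᵢ + pⱼ) - F pᵢ - F pⱼ + F 0`, where `F t = t log t`. These mixed second
differences form a positive semidefinite matrix because the second derivative of `F` is
`1 / t = ∫₀^∞ exp (-s t) ds`, a superposition of exponentials, whose mixed second differences have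
rank one, and integrating back from infinity preserves positivity. By the Schur product theorem the
entrywise exponential is a sum of positive semidefinite matrices, and since `F` is strictly convex
the entries in each row are distinct, so a Vandermonde argument excludes a common kernel vector.
-/

open Filter Set Topology
open scoped fwdDiff

section Vandermonde

variable {ι R : Type*} [Fintype ι] [CommRing R] [IsDomain R]

lemma eq_zero_of_forall_sum_mul_pow_eq_zero {x c : ι → R} (hx : Function.Injective x)
    (h : ∀ k : ℕ, ∑ i, c i * x i ^ k = 0) : c = 0 := by
  have hinj : Function.Injective fun i => powersHom R (x i) :=
    (powersHom R).injective.comp hx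
  have hindep := (linearIndependent_monoidHom (Multiplicative ℕ) R).comp _ hinj
  refine funext (Fintype.linearIndependent_iff.1 hindep c (funext fun k => ?_))
  simpa using h k.toAdd

end Vandermonde

section EntrywiseExp

variable {ι : Type*}

open scoped ComplexOrder in
lemma posSemidef_map_pow_s1 [Finite ι] {𝕜 : Type*} [RCLike 𝕜] {M : Matrix ι ι 𝕜}
    (hM : M.PosSemidef) (k : ℕ) :
    (M.map (· ^ k)).PosSemidef := by
  induction k with
  | zero =>
    convert Matrix.posSemidef_vecMulVec_self_star (fun _ : ι => (1 : 𝕜)) using 1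
    ext i j
    simp [Matrix.vecMulVec_apply]
  | succ k ih =>
    simpa [Matrix.hadamard, Matrix.map, pow_succ] using! ih.hadamard hM

lemma hasSum_dotProduct_map_pow_mulVec [Fintype ι] (M : Matrix ι ι ℝ) (c d : ι → ℝ) :
    HasSum (fun k : ℕ => (c ⬝ᵥ (M.map (· ^ k)).mulVec d) / k.factorial)
      (c ⬝ᵥ (M.map Real.exp).mulVec d) := by
  have hexp (x : ℝ) : HasSum (fun k : ℕ => x ^ k / k.factorial) (Real.exp x) := by
    rw [Real.exp_eq_exp_ℝ]
    exact NormedSpace.expSeries_div_hasSum_exp x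
  simp only [dotProduct, Matrix.mulVec, Finset.sum_div, mul_div_assoc, Finset.mul_sum,
    mul_div_right_comm _ (d _), Matrix.map_apply]
  exact hasSum_sum fun i _ => hasSum_sum fun j _ => ((hexp (M i j)).mul_right _).mul_left _

lemma posDef_map_exp [Finite ι] {M : Matrix ι ι ℝ} (hM : M.PosSemidef)
    (hrow : ∀ i, Function.Injective (M i)) : (M.map Real.exp).PosDef := by
  cases nonempty_fintype ι
  refine .of_dotProduct_mulVec_pos (hM.isHermitian.map _ fun _ => rfl) fun c hc => ?_
  have hsum := hasSum_dotProduct_map_pow_mulVec M (star c) c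
  have hterm (k : ℕ) : 0 ≤ (star c ⬝ᵥ (M.map (· ^ k)).mulVec c) / k.factorial :=
    div_nonneg ((posSemidef_map_pow_s1 hM k).dotProduct_mulVec_nonneg c) (by positivity)
  refine (hsum.nonneg hterm).lt_of_ne' fun hzero => hc ?_
  rw [hzero, hasSum_zero_iff_of_nonneg hterm] at hsum
  have hker (k : ℕ) : (M.map (· ^ k)).mulVec c = 0 := by
    rw [← (posSemidef_map_pow_s1 hM k).dotProduct_mulVec_zero_iff]
    simpa [Nat.factorial_ne_zero] using congrFun hsum k
  obtain ⟨i, -⟩ := Function.ne_iff.1 hc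
  refine eq_zero_of_forall_sum_mul_pow_eq_zero (hrow i) fun k => ?_
  simpa [Matrix.mulVec, dotProduct, mul_comm] using congrFun (hker k) i

end EntrywiseExp

section DerivativeAtTop

lemma nonneg_of_hasDerivAt_nonpos_of_tendsto_zero {f f' : ℝ → ℝ} {a : ℝ}
    (hcont : ContinuousOn f (Ici a)) (hderiv : ∀ t, a < t → HasDerivAt f (f' t) t)
    (hf' : ∀ t, a < t → f' t ≤ 0) (hlim : Tendsto f atTop (𝓝 0)) : 0 ≤ f a := by
  have hanti : AntitoneOn f (Ici a) := by
    refine antitoneOn_of_hasDerivWithinAt_nonpos (convex_Ici a) hcont (f' := f') ?_ ?_ <;>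
      rw [interior_Ici]
    exacts [fun t ht => (hderiv t ht).hasDerivWithinAt, hf']
  refine le_of_tendsto hlim ?_
  filter_upwards [eventually_ge_atTop a] with t ht
  exact hanti self_mem_Ici ht ht

lemma posSemidef_of_hasDerivAt_neg_of_tendsto_zero {ι : Type*} [Finite ι]
    {M N : ℝ → Matrix ι ι ℝ} {a : ℝ} (hcont : ∀ i j, ContinuousOn (fun t => M t i j) (Ici a))
    (hderiv : ∀ t, a < t → ∀ i j, HasDerivAt (fun t => M t i j) (-N t i j) t)
    (hN : ∀ t, a < t → (N t).PosSemidef)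
    (hlim : ∀ i j, Tendsto (fun t => M t i j) atTop (𝓝 0)) : (M a).PosSemidef := by
  cases nonempty_fintype ι
  have hle (i j : ι) : M a i j ≤ M a j i := by
    refine sub_nonneg.1 (nonneg_of_hasDerivAt_nonpos_of_tendsto_zero
      (f := fun t => M t j i - M t i j) (f' := fun _ => 0) ((hcont j i).sub (hcont i j))
      (fun t ht => ?_) (fun _ _ => le_rfl) (by simpa using (hlim j i).sub (hlim i j)))
    have hsymm : N t j i = N t i j := by simpa using (hN t ht).isHermitian.apply i j
    simpa [hsymm] using! (hderiv t ht j i).sub (hderiv t ht i j)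
  refine .of_dotProduct_mulVec_nonneg
    (Matrix.IsHermitian.ext fun i j => by simpa using (hle j i).antisymm (hle i j)) fun c => ?_
  refine nonneg_of_hasDerivAt_nonpos_of_tendsto_zero (f := fun t => star c ⬝ᵥ (M t).mulVec c)
    (f' := fun t => -(star c ⬝ᵥ (N t).mulVec c)) ?_ (fun t ht => ?_)
    (fun t ht => neg_nonpos.2 ((hN t ht).dotProduct_mulVec_nonneg c)) ?_
  · exact continuousOn_finsetSum _ fun i _ => continuousOn_const.mul <|
      continuousOn_finsetSum _ fun j _ => (hcont i j).mul continuousOn_const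
  · rw [← dotProduct_neg, ← Matrix.neg_mulVec]
    exact HasDerivAt.fun_sum fun i _ => HasDerivAt.const_mul _ <|
      HasDerivAt.fun_sum fun j _ => (hderiv t ht i j).mul_const _
  · have hsum : Tendsto (fun t => star c ⬝ᵥ (M t).mulVec c) atTop
        (𝓝 (star c ⬝ᵥ (0 : Matrix ι ι ℝ).mulVec c)) :=
      tendsto_finsetSum _ fun i _ => Tendsto.const_mul _ <|
        tendsto_finsetSum _ fun j _ => (hlim i j).mul_const _
    simpa using hsum

end DerivativeAtTop

section ForwardDifference

variable {f f' : ℝ → ℝ} {a h t : ℝ}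

lemma hasDerivAt_fwdDiff (ht : HasDerivAt f (f' t) t) (hth : HasDerivAt f (f' (t + h)) (t + h)) :
    HasDerivAt (Δ_[h] f) (Δ_[h] f' t) t :=
  (hth.comp_add_const t h).sub ht

lemma continuousOn_fwdDiff (hf : ContinuousOn f (Ici a)) (hh : 0 ≤ h) :
    ContinuousOn (Δ_[h] f) (Ici a) := by
  refine (hf.comp (continuousOn_id.add continuousOn_const) fun t ht => ?_).sub hf
  exact le_add_of_le_of_nonneg ht hh

lemma tendsto_fwdDiff_atTop_zero {l : ℝ} (hf : Tendsto f atTop (𝓝 l)) (h : ℝ) :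
    Tendsto (Δ_[h] f) atTop (𝓝 0) := by
  simpa using! (hf.comp (tendsto_atTop_add_const_right atTop h tendsto_id)).sub hf

lemma strictMonoOn_fwdDiff (hf : StrictConvexOn ℝ (Ici a) f) (hh : 0 < h) :
    StrictMonoOn (Δ_[h] f) (Ici a) := by
  intro y hy z hz hyz
  have hyh : y + h ∈ Ici a := le_add_of_le_of_nonneg hy hh.le
  have hzh : z + h ∈ Ici a := le_add_of_le_of_nonneg hz hh.le
  have hleft := hf.secant_strict_mono hy hyh hzh (by linarith) (by linarith) (by linarith)
  have hright := hf.secant_strict_mono hzh hy hz (by linarith) (by linarith) hyz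
  have hslope : (f (y + h) - f y) / h < (f (z + h) - f z) / h := by
    calc (f (y + h) - f y) / h = (f (y + h) - f y) / (y + h - y) := by ring
      _ < (f (z + h) - f y) / (z + h - y) := hleft
      _ = (f y - f (z + h)) / (y - (z + h)) := by rw [← neg_div_neg_eq]; ring
      _ < (f z - f (z + h)) / (z - (z + h)) := hright
      _ = (f (z + h) - f z) / h := by rw [← neg_div_neg_eq]; ring
  exact (div_lt_div_iff_of_pos_right hh).1 hslope

end ForwardDifference

/-- The matrix of mixed second differences
`f (t + pᵢ + pⱼ) - f (t + pᵢ) - f (t + pⱼ) + f t` of a function `f` at the base point `t`. -/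
def mixedDiff {ι : Type*} (f : ℝ → ℝ) (p : ι → ℝ) (t : ℝ) : Matrix ι ι ℝ :=
  .of fun i j => Δ_[p i] (Δ_[p j] f) t

section MixedDiff

variable {ι : Type*} {p : ι → ℝ}

lemma posSemidef_mixedDiff_exp_neg_mul [Finite ι] (p : ι → ℝ) (s t : ℝ) :
    (mixedDiff (fun u => Real.exp (-(s * u))) p t).PosSemidef := by
  convert (Matrix.posSemidef_vecMulVec_self_star fun i => Real.exp (-(s * p i)) - 1).smul
    (Real.exp_nonneg (-(s * t))) using 1
  ext i j
  simp only [mixedDiff, fwdDiff, Matrix.of_apply, Matrix.smul_apply, Matrix.vecMulVec_apply,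
    star_trivial, smul_eq_mul, mul_add, neg_add, Real.exp_add]
  ring

lemma hasDerivAt_exp_neg_mul_div {u : ℝ} (hu : u ≠ 0) (s : ℝ) :
    HasDerivAt (fun s => Real.exp (-(s * u)) / u) (-Real.exp (-(s * u))) s := by
  simpa [neg_div, hu] using! ((hasDerivAt_mul_const u).neg.exp (x := s)).div_const u

lemma tendsto_exp_neg_mul_div_atTop_zero {u : ℝ} (hu : 0 < u) :
    Tendsto (fun s => Real.exp (-(s * u)) / u) atTop (𝓝 0) := by
  simpa using (Real.tendsto_exp_neg_atTop_nhds_zero.comp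
    (tendsto_id.atTop_mul_const hu)).div_const u

lemma posSemidef_mixedDiff_inv [Finite ι] (hp : ∀ i, 0 ≤ p i) {t : ℝ} (ht : 0 < t) :
    (mixedDiff (fun u => u⁻¹) p t).PosSemidef := by
  let M (s : ℝ) : Matrix ι ι ℝ := mixedDiff (fun u => Real.exp (-(s * u)) / u) p t
  have hM : M 0 = mixedDiff (fun u => u⁻¹) p t := by simp [M]
  have hpos (i : ι) : 0 < t + p i := add_pos_of_pos_of_nonneg ht (hp i)
  have hpos₂ (i j : ι) : 0 < t + p i + p j := add_pos_of_pos_of_nonneg (hpos i) (hp j)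
  have hderiv (s : ℝ) (i j : ι) : HasDerivAt (fun s => M s i j)
      (-mixedDiff (fun u => Real.exp (-(s * u))) p t i j) s := by
    refine (((hasDerivAt_exp_neg_mul_div (hpos₂ i j).ne' s).sub
      (hasDerivAt_exp_neg_mul_div (hpos i).ne' s)).sub
      ((hasDerivAt_exp_neg_mul_div (hpos j).ne' s).sub
        (hasDerivAt_exp_neg_mul_div ht.ne' s))).congr_deriv ?_
    simp only [mixedDiff, fwdDiff, Matrix.of_apply]
    ring
  have hlim (i j : ι) : Tendsto (fun s => M s i j) atTop (𝓝 0) := by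
    simpa using! ((tendsto_exp_neg_mul_div_atTop_zero (hpos₂ i j)).sub
      (tendsto_exp_neg_mul_div_atTop_zero (hpos i))).sub
      ((tendsto_exp_neg_mul_div_atTop_zero (hpos j)).sub (tendsto_exp_neg_mul_div_atTop_zero ht))
  rw [← hM]
  exact posSemidef_of_hasDerivAt_neg_of_tendsto_zero
    (fun i j s _ => (hderiv s i j).continuousAt.continuousWithinAt) (fun s _ => hderiv s)
    (fun s _ => posSemidef_mixedDiff_exp_neg_mul p s t) hlim

lemma posSemidef_mixedDiff_of_hasDerivAt_neg [Finite ι] {f g : ℝ → ℝ} {a : ℝ}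
    (hp : ∀ i, 0 ≤ p i) (hcont : ContinuousOn f (Ici a))
    (hderiv : ∀ t, a < t → HasDerivAt f (-g t) t)
    (hg : ∀ t, a < t → (mixedDiff g p t).PosSemidef)
    (hlim : ∀ i j, Tendsto (Δ_[p i] (Δ_[p j] f)) atTop (𝓝 0)) : (mixedDiff f p a).PosSemidef := by
  refine posSemidef_of_hasDerivAt_neg_of_tendsto_zero (M := mixedDiff f p)
    (fun i j => continuousOn_fwdDiff (continuousOn_fwdDiff hcont (hp j)) (hp i))
    (fun t ht i j => ?_) hg hlim
  have hfirst (u : ℝ) (hu : a < u) : HasDerivAt (Δ_[p j] f) (Δ_[p j] (-g) u) u :=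
    hasDerivAt_fwdDiff (hderiv u hu) (hderiv _ (lt_add_of_lt_of_nonneg hu (hp j)))
  refine (hasDerivAt_fwdDiff (hfirst t ht)
    (hfirst _ (lt_add_of_lt_of_nonneg ht (hp i)))).congr_deriv ?_
  simp only [mixedDiff, fwdDiff, Matrix.of_apply, Pi.neg_apply]
  ring

end MixedDiff

section Logarithm

variable {ι : Type*} {p : ι → ℝ}

lemma tendsto_fwdDiff_log_atTop_zero (h : ℝ) : Tendsto (Δ_[h] Real.log) atTop (𝓝 0) :=
  Real.tendsto_log_comp_add_sub_log h

lemma tendsto_fwdDiff_mul_log_sub_mul_log (h : ℝ) :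
    Tendsto (fun t => Δ_[h] (fun u => u * Real.log u) t - h * Real.log t) atTop (𝓝 h) := by
  have hsum : Tendsto (fun t => t * Real.log (1 + h / t) + h * Δ_[h] Real.log t) atTop
      (𝓝 (h + h * 0)) :=
    (Real.tendsto_mul_log_one_add_div_atTop h).add ((tendsto_fwdDiff_log_atTop_zero h).const_mul h)
  rw [mul_zero, add_zero] at hsum
  refine hsum.congr' ?_
  filter_upwards [eventually_gt_atTop 0, eventually_gt_atTop (-h)] with t ht hth
  have hquot : 1 + h / t = (t + h) / t := by field_simp
  rw [hquot, Real.log_div (by linarith) ht.ne']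
  simp only [fwdDiff]
  ring

lemma tendsto_fwdDiff_fwdDiff_mul_log_atTop_zero (x y : ℝ) :
    Tendsto (Δ_[x] (Δ_[y] fun u => u * Real.log u)) atTop (𝓝 0) := by
  have hsum := (tendsto_fwdDiff_atTop_zero (tendsto_fwdDiff_mul_log_sub_mul_log y) x).add
    ((tendsto_fwdDiff_log_atTop_zero x).const_mul y)
  rw [mul_zero, add_zero] at hsum
  refine hsum.congr fun t => ?_
  simp only [fwdDiff]
  ring

lemma posSemidef_mixedDiff_neg_log [Finite ι] (hp : ∀ i, 0 ≤ p i) {t : ℝ} (ht : 0 < t) :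
    (mixedDiff (fun u => -Real.log u) p t).PosSemidef := by
  refine posSemidef_mixedDiff_of_hasDerivAt_neg hp
    (fun u hu => (Real.continuousAt_log (ht.trans_le hu).ne').neg.continuousWithinAt)
    (fun u hu => (Real.hasDerivAt_log (ht.trans hu).ne').neg)
    (fun u hu => posSemidef_mixedDiff_inv hp (ht.trans hu)) fun i j => ?_
  convert (tendsto_fwdDiff_atTop_zero (tendsto_fwdDiff_log_atTop_zero (p j)) (p i)).neg using 1
  · ext u
    simp only [fwdDiff]
    ring
  · rw [neg_zero]

lemma posSemidef_mixedDiff_mul_log [Finite ι] (hp : ∀ i, 0 ≤ p i) {t : ℝ} (ht : 0 ≤ t) :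
    (mixedDiff (fun u => u * Real.log u) p t).PosSemidef := by
  refine posSemidef_mixedDiff_of_hasDerivAt_neg (g := fun u => -Real.log u - 1) hp
    Real.continuous_mul_log.continuousOn (fun u hu => ?_) (fun u hu => ?_)
    fun i j => tendsto_fwdDiff_fwdDiff_mul_log_atTop_zero (p i) (p j)
  · convert Real.hasDerivAt_mul_log (ht.trans_lt hu).ne' using 1
    ring
  · simpa [mixedDiff, fwdDiff] using posSemidef_mixedDiff_neg_log hp (ht.trans_lt hu)

lemma injective_mixedDiff_mul_log_zero_row (hp : ∀ i, 0 ≤ p i) (hinj : Function.Injective p)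
    {i : ι} (hi : 0 < p i) : Function.Injective (mixedDiff (fun u => u * Real.log u) p 0 i) := by
  have hmono := strictMonoOn_fwdDiff Real.strictConvexOn_mul_log hi
  intro j k hjk
  refine hinj (hmono.injOn (hp j) (hp k) ?_)
  simp only [mixedDiff, fwdDiff, Matrix.of_apply, zero_add, add_comm (p i)] at hjk ⊢
  linarith

lemma add_rpow_add_eq_exp_mixedDiff {i j : ι} (hi : 0 < p i) (hj : 0 < p j) :
    (p i + p j) ^ (p i + p j) = p i ^ p i *
      Real.exp (mixedDiff (fun u => u * Real.log u) p 0 i j) * p j ^ p j := by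
  rw [Real.rpow_def_of_pos (add_pos hi hj), Real.rpow_def_of_pos hi,
    Real.rpow_def_of_pos hj, ← Real.exp_add, ← Real.exp_add]
  simp only [mixedDiff, fwdDiff, Matrix.of_apply, zero_add, zero_mul, sub_zero]
  ring_nf

end Logarithm

theorem stmt_1_general {ι : Type*} [Finite ι] (p : ι → ℝ) (hpos : ∀ i, 0 < p i)
    (hp : Function.Injective p) :
    (Matrix.of fun i j : ι => (p i + p j) ^ (p i + p j)).PosDef := by
  classical
  cases nonempty_fintype ι
  have hnonneg (i : ι) : 0 ≤ p i := (hpos i).le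
  let D : Matrix ι ι ℝ := .diagonal fun i => p i ^ p i
  have hD : Function.Injective D.mulVec := by
    refine Matrix.mulVec_injective_of_isUnit ?_
    simpa [D, Matrix.isUnit_diagonal, Pi.isUnit_iff] using
      fun i => (Real.rpow_pos_of_pos (hpos i) _).ne'
  have hexp := posDef_map_exp (posSemidef_mixedDiff_mul_log hnonneg le_rfl)
    fun i => injective_mixedDiff_mul_log_zero_row hnonneg hp (hpos i)
  convert hexp.conjTranspose_mul_mul_same hD using 1
  ext i j
  simp [D, add_rpow_add_eq_exp_mixedDiff (hpos i) (hpos j)]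

/-- The matrix `[(pᵢ + pⱼ)^(pᵢ + pⱼ)]` is nonsingular. -/
theorem stmt_1 (n : ℕ) (p : Fin n → ℝ) (hpos : ∀ i, 0 < p i) (hmono : StrictMono p) :
    (Matrix.of fun i j : Fin n => (p i + p j) ^ (p i + p j)).det ≠ 0 :=
  (stmt_1_general p hpos hmono.injective).det_pos.ne'
end

section
/- Let p_1 < p_2 < ... < p_n be positive real numbers and let B be the n×n matrix with (i,j) entry (p_i + p_j)^(p_i + p_j). Then B is totally positive: every minor of B (the determinant of any square submatrix obtained by selecting rows i_1 < ... < i_k and columns j_1 < ... < j_k) is nonnegative. -/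
/-!
As `h → 0⁺`, the quantity `u = (1 - exp (-h x)) / h` tends to `x`, so `u log u` tends to `x log x`.
With `q = exp (-h x)`, the expansion `(1 - q) log (1 - q) + q = ∑ qⁿ⁺² / ((n + 1) (n + 2))` has
nonnegative coefficients, so up to an affine function of `x` and an error that vanishes as `h → 0⁺`,
`x log x` is a nonnegative combination of exponentials `exp (-n h x)`. Exponentiating, `x ^ x` is a
pointwise limit of finite sums `∑ cₗ exp (aₗ x)` with `cₗ ≥ 0`. By the Cauchy–Binet formula, the
determinant of such a sum evaluated at the `xᵢ + yⱼ` is a nonnegative combination of products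
`det [exp (bᵢ xⱼ)] * det [exp (bᵢ yⱼ)]`, with `b` ranging over the tuples of exponents `aₗ`. Sorting
`b` changes both factors by the same sign, so it remains to see that `det [exp (bᵢ xⱼ)] > 0` for
strictly increasing `b` and `x`. It does not vanish, by Rolle's theorem, and deforming `b` to
`0, 1, 2, …` turns it into a Vandermonde determinant, which is positive.
-/

open Filter Finset Matrix Topology
open scoped Nat

section CauchyBinet

variable {R m n : Type*} [CommRing R] [Fintype m] [Fintype n] [DecidableEq n]

theorem det_mul_eq_sum_det_submatrix_mul_prod (A : Matrix n m R) (B : Matrix m n R) :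
    (A * B).det = ∑ p : n → m, (A.submatrix id p).det * ∏ i, B (p i) i := by
  classical
  simp only [det_apply', mul_apply, prod_univ_sum, mul_sum, sum_mul, Fintype.piFinset_univ]
  rw [sum_comm]
  simp [prod_mul_distrib, mul_assoc]

theorem factorial_card_mul_det_mul (A : Matrix n m R) (B : Matrix m n R) :
    ((Fintype.card n)! : R) * (A * B).det =
      ∑ p : n → m, (A.submatrix id p).det * (B.submatrix p id).det := by
  have reindex (σ : Equiv.Perm n) :
      ∑ p : n → m, (A.submatrix id p).det * (Equiv.Perm.sign σ * ∏ i, B (p (σ i)) i) =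
        (A * B).det := by
    have hperm (p : n → m) :
        (A.submatrix id (p ∘ σ)).det = Equiv.Perm.sign σ * (A.submatrix id p).det :=
      det_permute' σ (A.submatrix id p)
    calc ∑ p : n → m, (A.submatrix id p).det * (Equiv.Perm.sign σ * ∏ i, B (p (σ i)) i)
        = ∑ p : n → m, (A.submatrix id (p ∘ σ)).det * ∏ i, B ((p ∘ σ) i) i := by
          simp only [hperm, mul_left_comm, mul_assoc, Function.comp_apply]
      _ = ∑ p : n → m, (A.submatrix id p).det * ∏ i, B (p i) i :=
          (Equiv.arrowCongr σ.symm (Equiv.refl m)).sum_comp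
            fun p => (A.submatrix id p).det * ∏ i, B (p i) i
      _ = (A * B).det := (det_mul_eq_sum_det_submatrix_mul_prod A B).symm
  calc ((Fintype.card n)! : R) * (A * B).det
      = ∑ σ : Equiv.Perm n,
          ∑ p : n → m, (A.submatrix id p).det * (Equiv.Perm.sign σ * ∏ i, B (p (σ i)) i) := by
        simp [reindex, Fintype.card_perm]
    _ = ∑ p : n → m, (A.submatrix id p).det * (B.submatrix p id).det := by
        rw [sum_comm]
        simp [det_apply', mul_sum]

end CauchyBinet

section ExpMatrix

/-- The generalized Vandermonde matrix `[exp (aᵢ xⱼ)]`, that is, the matrix with entries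
`zⱼ ^ aᵢ` for `zⱼ = exp xⱼ`. -/
noncomputable def expMatrix {ι κ : Type*} (a : ι → ℝ) (x : κ → ℝ) : Matrix ι κ ℝ :=
  Matrix.of fun i j => Real.exp (a i * x j)

theorem transpose_expMatrix {ι κ : Type*} (a : ι → ℝ) (x : κ → ℝ) :
    (expMatrix a x)ᵀ = expMatrix x a := by
  ext
  simp [expMatrix, mul_comm]

theorem exists_strictMono_hasDerivAt_eq_zero {k : ℕ} {f f' : ℝ → ℝ} {x : Fin (k + 1) → ℝ}
    (hx : StrictMono x) (hf : ∀ t, HasDerivAt f (f' t) t) (hfx : ∀ j, f (x j) = 0) :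
    ∃ y : Fin k → ℝ, StrictMono y ∧ ∀ j, f' (y j) = 0 := by
  have rolle (j : Fin k) : ∃ t ∈ Set.Ioo (x j.castSucc) (x j.succ), f' t = 0 :=
    exists_hasDerivAt_eq_zero (hx Fin.castSucc_lt_succ)
      (fun t _ => (hf t).continuousAt.continuousWithinAt) ((hfx _).trans (hfx _).symm)
      fun t _ => hf t
  choose y hy hfy using rolle
  refine ⟨y, fun i j hij => ?_, hfy⟩
  calc y i < x i.succ := (hy i).2
    _ ≤ x j.castSucc := hx.monotone (Fin.succ_le_castSucc_iff.2 hij)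
    _ < y j := (hy j).1

theorem eq_zero_of_sum_mul_exp_eq_zero {k : ℕ} {a x c : Fin k → ℝ} (ha : Function.Injective a)
    (hx : StrictMono x) (h : ∀ j, ∑ i, c i * Real.exp (a i * x j) = 0) : c = 0 := by
  induction k with
  | zero => exact Subsingleton.elim _ _
  | succ k ih =>
    -- Dividing by `exp (a 0 * t)` turns one term into a constant, which differentiation removes.
    let f (t : ℝ) : ℝ := ∑ i, c i * Real.exp ((a i - a 0) * t)
    have hf (t : ℝ) :
        HasDerivAt f (∑ i, c i * (a i - a 0) * Real.exp ((a i - a 0) * t)) t := by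
      refine HasDerivAt.fun_sum fun i _ => ?_
      have hexp : HasDerivAt (fun t => Real.exp ((a i - a 0) * t))
          (Real.exp ((a i - a 0) * t) * (a i - a 0)) t := by
        simpa using ((hasDerivAt_id t).const_mul (a i - a 0)).exp
      exact (hexp.const_mul (c i)).congr_deriv (by ring)
    have hfx (j : Fin (k + 1)) : f (x j) = 0 := by
      calc f (x j) = (∑ i, c i * Real.exp (a i * x j)) / Real.exp (a 0 * x j) := by
            simp only [f, sum_div, sub_mul, Real.exp_sub, mul_div_assoc]
        _ = 0 := by rw [h, zero_div]
    obtain ⟨y, hy, hfy⟩ := exists_strictMono_hasDerivAt_eq_zero hx hf hfx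
    have hsucc : (fun i : Fin k => c i.succ * (a i.succ - a 0)) = 0 :=
      ih (a := fun i => a i.succ - a 0)
        (sub_left_injective.comp (ha.comp (Fin.succ_injective k))) hy fun j => by
          simpa [Fin.sum_univ_succ] using hfy j
    have hc (i : Fin k) : c i.succ = 0 :=
      (mul_eq_zero.1 (congrFun hsucc i)).resolve_right
        (sub_ne_zero.2 (ha.ne (Fin.succ_ne_zero i)))
    have hc0 : c 0 = 0 := by simpa [Fin.sum_univ_succ, hc] using h 0
    exact funext (Fin.cases hc0 hc)

variable {k : ℕ} {a x y : Fin k → ℝ}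

theorem det_expMatrix_ne_zero (ha : Function.Injective a) (hx : StrictMono x) :
    (expMatrix a x).det ≠ 0 := by
  intro h
  obtain ⟨c, hc, hcx⟩ := exists_vecMul_eq_zero_iff.2 h
  exact hc (eq_zero_of_sum_mul_exp_eq_zero ha hx (congrFun hcx))

theorem det_expMatrix_natCast_pos (hx : StrictMono x) :
    0 < (expMatrix (fun i : Fin k => (i : ℝ)) x).det := by
  have hvand : (expMatrix (fun i : Fin k => (i : ℝ)) x)ᵀ =
      vandermonde fun j => Real.exp (x j) := by
    ext
    simp [expMatrix, Real.exp_nat_mul]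
  rw [← det_transpose, hvand, det_vandermonde]
  exact prod_pos fun i _ => prod_pos fun j hj =>
    sub_pos.2 (Real.exp_lt_exp.2 (hx (mem_Ioi.1 hj)))

theorem det_expMatrix_pos (ha : StrictMono a) (hx : StrictMono x) : 0 < (expMatrix a x).det := by
  let b (t : ℝ) (i : Fin k) : ℝ := (1 - t) * i + t * a i
  have hb {t : ℝ} (ht : t ∈ Set.Icc (0 : ℝ) 1) : StrictMono (b t) := fun i j hij => by
    have hij' : (i : ℝ) < j := Nat.cast_lt.2 hij
    rcases ht.1.eq_or_lt with rfl | ht0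
    · simpa [b] using hij
    · exact add_lt_add_of_le_of_lt (mul_le_mul_of_nonneg_left hij'.le (sub_nonneg.2 ht.2))
        (mul_lt_mul_of_pos_left (ha hij) ht0)
  have hcont : Continuous fun t => (expMatrix (b t) x).det := by
    refine Continuous.matrix_det (continuous_matrix fun i j => ?_)
    simp only [expMatrix, of_apply, b]
    fun_prop
  have h0 : 0 < (expMatrix (b 0) x).det := by simpa [b] using det_expMatrix_natCast_pos hx
  have h1 : b 1 = a := by simp [b]
  by_contra! hneg
  obtain ⟨t, ht, hzero⟩ := intermediate_value_Icc' zero_le_one hcont.continuousOn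
    ⟨h1 ▸ hneg, h0.le⟩
  exact det_expMatrix_ne_zero (hb ht).injective hx hzero

theorem det_expMatrix_nonneg (ha : Monotone a) (hx : Monotone x) : 0 ≤ (expMatrix a x).det := by
  by_cases hai : Function.Injective a
  · by_cases hxi : Function.Injective x
    · exact (det_expMatrix_pos (ha.strictMono_of_injective hai)
        (hx.strictMono_of_injective hxi)).le
    · obtain ⟨i, j, hij, hne⟩ := Function.not_injective_iff.1 hxi
      exact (det_zero_of_column_eq hne fun l => by simp [expMatrix, hij]).ge
  · obtain ⟨i, j, hij, hne⟩ := Function.not_injective_iff.1 hai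
    exact (det_zero_of_row_eq hne (funext fun l => by simp [expMatrix, hij])).ge

theorem det_expMatrix_mul_det_expMatrix_nonneg (b : Fin k → ℝ) (hx : Monotone x)
    (hy : Monotone y) : 0 ≤ (expMatrix b x).det * (expMatrix b y).det := by
  let σ := Tuple.sort b
  have hsort (z : Fin k → ℝ) :
      (expMatrix (b ∘ σ) z).det = (Equiv.Perm.sign σ : ℤ) * (expMatrix b z).det :=
    det_permute σ (expMatrix b z)
  have hsign : ((Equiv.Perm.sign σ : ℤ) : ℝ) * (Equiv.Perm.sign σ : ℤ) = 1 := by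
    norm_cast
    simp
  calc 0 ≤ (expMatrix (b ∘ σ) x).det * (expMatrix (b ∘ σ) y).det :=
        mul_nonneg (det_expMatrix_nonneg (Tuple.monotone_sort b) hx)
          (det_expMatrix_nonneg (Tuple.monotone_sort b) hy)
    _ = (expMatrix b x).det * (expMatrix b y).det := by
        rw [hsort, hsort, mul_mul_mul_comm, hsign, one_mul]

theorem det_sum_mul_exp_add_nonneg {ι : Type*} [Fintype ι] (b : ι → ℝ) {c : ι → ℝ}
    (hc : ∀ l, 0 ≤ c l) (hx : Monotone x) (hy : Monotone y) :
    0 ≤ (Matrix.of fun i j => ∑ l, c l * Real.exp (b l * (x i + y j))).det := by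
  let A : Matrix (Fin k) ι ℝ := Matrix.of fun i l => c l * expMatrix x b i l
  have hfactor : (Matrix.of fun i j => ∑ l, c l * Real.exp (b l * (x i + y j))) =
      A * expMatrix b y := by
    ext i j
    simp only [A, expMatrix, mul_apply, of_apply, mul_assoc, ← Real.exp_add, mul_add,
      mul_comm (x i)]
  have hA (p : Fin k → ι) :
      (A.submatrix id p).det = (∏ l, c (p l)) * (expMatrix (b ∘ p) x).det := by
    rw [← transpose_expMatrix, det_transpose, ← det_mul_row]
    rfl
  have hfact : (0 : ℝ) < (Fintype.card (Fin k))! := by positivity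
  rw [hfactor, ← mul_nonneg_iff_of_pos_left hfact, factorial_card_mul_det_mul]
  refine sum_nonneg fun p _ => ?_
  rw [hA, mul_assoc]
  exact mul_nonneg (prod_nonneg fun l _ => hc (p l))
    (det_expMatrix_mul_det_expMatrix_nonneg (b ∘ p) hx hy)

end ExpMatrix

section ExpSemiring

variable {s : Set ℝ} {f : s → ℝ}

/-- The functions `x ↦ c * exp (a * x)` on `s` with `0 ≤ c`, as a multiplicative monoid: the
building blocks of `expSemiring`. -/
def expMonoid (s : Set ℝ) : Submonoid (s → ℝ) where
  carrier := {f | ∃ a c : ℝ, 0 ≤ c ∧ f = fun x : s => c * Real.exp (a * x)}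
  one_mem' := ⟨0, 1, zero_le_one, by ext; simp⟩
  mul_mem' := by
    rintro _ _ ⟨a, c, hc, rfl⟩ ⟨b, d, hd, rfl⟩
    refine ⟨a + b, c * d, mul_nonneg hc hd, funext fun x => ?_⟩
    simp only [Pi.mul_apply, add_mul, Real.exp_add]
    ring

/-- The semiring of pointwise limits on `s` of finite sums `∑ cₗ exp (aₗ x)` with `cₗ ≥ 0`: a
discrete substitute for the Laplace transforms of positive measures. -/
def expSemiring (s : Set ℝ) : Subsemiring (s → ℝ) :=
  (expMonoid s).subsemiringClosure.topologicalClosure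

theorem isClosed_expSemiring : IsClosed (expSemiring s : Set (s → ℝ)) :=
  Subsemiring.isClosed_topologicalClosure _

theorem const_mul_exp_mem_expSemiring (a : ℝ) {c : ℝ} (hc : 0 ≤ c) :
    (fun x : s => c * Real.exp (a * x)) ∈ expSemiring s :=
  Subsemiring.le_topologicalClosure _ (AddSubmonoid.subset_closure ⟨a, c, hc, rfl⟩)

theorem exp_affine_mem_expSemiring (a b : ℝ) :
    (fun x : s => Real.exp (a * x + b)) ∈ expSemiring s := by
  simpa only [Real.exp_add, mul_comm] using
    const_mul_exp_mem_expSemiring (s := s) a (Real.exp_pos b).le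

theorem const_mul_mem_expSemiring {c : ℝ} (hc : 0 ≤ c) (hf : f ∈ expSemiring s) :
    (fun x => c * f x) ∈ expSemiring s := by
  have hconst : (fun _ : s => c) ∈ expSemiring s := by
    simpa using const_mul_exp_mem_expSemiring (s := s) 0 hc
  exact mul_mem hconst hf

theorem exp_comp_mem_expSemiring (hf : f ∈ expSemiring s) :
    (fun x => Real.exp (f x)) ∈ expSemiring s := by
  refine isClosed_expSemiring.mem_of_tendsto
    (tendsto_pi_nhds.2 fun x => Real.tendsto_one_add_div_pow_exp (f x))
    (Eventually.of_forall fun n => ?_)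
  have hdiv : (fun x => f x / n) ∈ expSemiring s := by
    simpa only [div_eq_inv_mul] using const_mul_mem_expSemiring (by positivity) hf
  exact pow_mem (add_mem (one_mem _) hdiv) n

theorem det_add_nonneg_of_mem_expSemiring (hf : f ∈ expSemiring s) {k : ℕ} {x y : Fin k → ℝ}
    (hx : Monotone x) (hy : Monotone y) (hxy : ∀ i j, x i + y j ∈ s) :
    0 ≤ (Matrix.of fun i j => f ⟨x i + y j, hxy i j⟩).det := by
  have hclosed : IsClosed {f : s → ℝ | 0 ≤ (Matrix.of fun i j => f ⟨x i + y j, hxy i j⟩).det} := by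
    refine isClosed_le continuous_const (Continuous.matrix_det (continuous_matrix fun i j => ?_))
    exact continuous_apply _
  refine closure_minimal (fun g hg => ?_) hclosed hf
  obtain ⟨l, hl, rfl⟩ := AddSubmonoid.exists_list_of_mem_closure hg
  choose b c hc hbc using fun r : Fin l.length => hl _ (l.get_mem r)
  have hsum (z : s) : l.sum z = ∑ r, c r * Real.exp (b r * z) := by
    rw [← Fin.sum_univ_getElem l, Finset.sum_apply]
    exact sum_congr rfl fun r _ => congrFun (hbc r) z
  simpa only [Set.mem_ofPred_eq, hsum] using det_sum_mul_exp_add_nonneg b hc hx hy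

end ExpSemiring

section SelfPower

theorem hasSum_one_sub_mul_log_one_sub {q : ℝ} (hq : |q| < 1) :
    HasSum (fun n : ℕ => q ^ (n + 2) / ((n + 1) * (n + 2))) ((1 - q) * Real.log (1 - q) + q) := by
  have hlog := Real.hasSum_pow_div_log_of_abs_lt_one hq
  have htail : HasSum (fun n : ℕ => q ^ (n + 2) / (n + 2 : ℝ)) (-Real.log (1 - q) - q) := by
    simpa [add_assoc, one_add_one_eq_two] using (hasSum_nat_add_iff' 1).2 hlog
  have hvalue : (1 - q) * Real.log (1 - q) + q =
      q * -Real.log (1 - q) - (-Real.log (1 - q) - q) := by ring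
  rw [hvalue]
  refine ((hlog.mul_left q).sub htail).congr_fun fun n => ?_
  field_simp
  ring

/-- An approximation of `x * log x` as `h → 0⁺`, whose first summand is `h⁻¹` times the
sum in `hasSum_one_sub_mul_log_one_sub` at `q = exp (-h * x)` and whose second is affine in `x`. -/
noncomputable def mulLogApprox (h x : ℝ) : ℝ :=
  h⁻¹ * ((1 - Real.exp (-h * x)) * Real.log (1 - Real.exp (-h * x)) + Real.exp (-h * x)) +
    ((1 - Real.log h) * x - h⁻¹)

theorem exp_mulLogApprox_mem_expSemiring {h : ℝ} (hh : 0 < h) :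
    (fun x : Set.Ioi (0 : ℝ) => Real.exp (mulLogApprox h x)) ∈ expSemiring (Set.Ioi 0) := by
  have hseries : (fun x : Set.Ioi (0 : ℝ) => (1 - Real.exp (-h * x)) *
      Real.log (1 - Real.exp (-h * x)) + Real.exp (-h * x)) ∈ expSemiring (Set.Ioi 0) := by
    have hlt (x : Set.Ioi (0 : ℝ)) : |Real.exp (-h * x)| < 1 := by
      rw [abs_of_pos (Real.exp_pos _), Real.exp_lt_one_iff]
      exact mul_neg_of_neg_of_pos (neg_neg_of_pos hh) x.2
    refine isClosed_expSemiring.mem_of_tendsto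
      (Pi.hasSum.2 fun x => hasSum_one_sub_mul_log_one_sub (hlt x))
      (Eventually.of_forall fun t => sum_mem fun n _ => ?_)
    convert const_mul_exp_mem_expSemiring (s := Set.Ioi 0) (-((n + 2 : ℕ) * h))
      (by positivity : 0 ≤ (((n : ℝ) + 1) * (n + 2))⁻¹) using 2 with x
    rw [← Real.exp_nat_mul, div_eq_inv_mul, ← mul_assoc, mul_neg, neg_mul]
  have hexp := mul_mem
    (exp_comp_mem_expSemiring (const_mul_mem_expSemiring (inv_nonneg.2 hh.le) hseries))
    (exp_affine_mem_expSemiring (1 - Real.log h) (-h⁻¹))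
  simpa only [mulLogApprox, Pi.mul_def, ← Real.exp_add, ← sub_eq_add_neg] using hexp

theorem tendsto_one_sub_exp_neg_mul_div (x : ℝ) :
    Tendsto (fun h => (1 - Real.exp (-h * x)) / h) (𝓝[>] 0) (𝓝 x) := by
  have hderiv : HasDerivAt (fun h => 1 - Real.exp (-h * x)) x 0 := by
    simpa using ((((hasDerivAt_id (0 : ℝ)).neg.mul_const x).exp).const_sub 1)
  simpa [div_eq_inv_mul] using hderiv.tendsto_slope_zero_right

theorem tendsto_sub_one_sub_exp_neg_mul_div_mul_log (x : ℝ) :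
    Tendsto (fun h => (x - (1 - Real.exp (-h * x)) / h) * (1 - Real.log h)) (𝓝[>] 0) (𝓝 0) := by
  have hbound : Tendsto (fun h : ℝ => x ^ 2 * |h - h * Real.log h|) (𝓝[>] 0) (𝓝 0) := by
    have hcont : Continuous fun h : ℝ => x ^ 2 * |h - h * Real.log h| := by
      have := Real.continuous_mul_log
      fun_prop
    simpa using (hcont.tendsto 0).mono_left nhdsWithin_le_nhds
  have hsmall : ∀ᶠ h : ℝ in 𝓝[>] 0, |-h * x| ≤ 1 := by
    have hcont : Continuous fun h : ℝ => |-h * x| := by fun_prop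
    have hlim : Tendsto (fun h : ℝ => |-h * x|) (𝓝[>] 0) (𝓝 0) := by
      simpa using (hcont.tendsto 0).mono_left nhdsWithin_le_nhds
    exact hlim.eventually_le_const zero_lt_one
  refine squeeze_zero_norm' ?_ hbound
  filter_upwards [self_mem_nhdsWithin, hsmall] with h (hh : 0 < h) hhx
  calc ‖(x - (1 - Real.exp (-h * x)) / h) * (1 - Real.log h)‖
      = |Real.exp (-h * x) - 1 - -h * x| * |(1 - Real.log h) / h| := by
        rw [Real.norm_eq_abs, ← abs_mul]
        congr 1
        field_simp
        ring
    _ ≤ (-h * x) ^ 2 * |(1 - Real.log h) / h| := by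
        gcongr
        exact Real.abs_exp_sub_one_sub_id_le hhx
    _ = x ^ 2 * |h ^ 2 * ((1 - Real.log h) / h)| := by
        rw [abs_mul, abs_of_pos (pow_pos hh 2)]
        ring
    _ = x ^ 2 * |h - h * Real.log h| := by
        congr 2
        field_simp

theorem tendsto_mulLogApprox {x : ℝ} (hx : 0 < x) :
    Tendsto (fun h => mulLogApprox h x) (𝓝[>] 0) (𝓝 (x * Real.log x)) := by
  have hmain := (Real.continuous_mul_log.tendsto x).comp (tendsto_one_sub_exp_neg_mul_div x)
  have hsum := hmain.add (tendsto_sub_one_sub_exp_neg_mul_div_mul_log x)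
  rw [add_zero] at hsum
  refine hsum.congr' ?_
  filter_upwards [self_mem_nhdsWithin] with h (hh : 0 < h)
  have hq : Real.exp (-h * x) < 1 :=
    Real.exp_lt_one_iff.2 (mul_neg_of_neg_of_pos (neg_neg_of_pos hh) hx)
  simp only [mulLogApprox, Function.comp_apply]
  rw [Real.log_div (sub_pos.2 hq).ne' hh.ne']
  field_simp
  ring

theorem rpow_self_mem_expSemiring :
    (fun x : Set.Ioi (0 : ℝ) => (x : ℝ) ^ (x : ℝ)) ∈ expSemiring (Set.Ioi 0) := by
  have hlim : Tendsto (fun h (x : Set.Ioi (0 : ℝ)) => Real.exp (mulLogApprox h x)) (𝓝[>] 0)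
      (𝓝 fun x => (x : ℝ) ^ (x : ℝ)) := by
    refine tendsto_pi_nhds.2 fun x => ?_
    rw [Real.rpow_def_of_pos x.2, mul_comm]
    exact (tendsto_mulLogApprox x.2).rexp
  refine isClosed_expSemiring.mem_of_tendsto hlim ?_
  filter_upwards [self_mem_nhdsWithin] with h hh using exp_mulLogApprox_mem_expSemiring hh

end SelfPower

theorem stmt_3_general {k : ℕ} {x y : Fin k → ℝ} (hx : Monotone x) (hy : Monotone y)
    (hxy : ∀ i j, 0 < x i + y j) :
    0 ≤ (Matrix.of fun i j => (x i + y j) ^ (x i + y j)).det :=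
  det_add_nonneg_of_mem_expSemiring rpow_self_mem_expSemiring hx hy hxy

/-- The matrix `[(pᵢ + pⱼ)^(pᵢ + pⱼ)]` is totally positive: every minor is
nonnegative. -/
theorem stmt_3 (n : ℕ) (p : Fin n → ℝ) (hpos : ∀ i, 0 < p i) (hmono : StrictMono p)
    (k : ℕ) (f g : Fin k → Fin n) (hf : StrictMono f) (hg : StrictMono g) :
    0 ≤ ((Matrix.of fun i j : Fin n => (p i + p j) ^ (p i + p j)).submatrix f g).det :=
  stmt_3_general (hmono.comp hf).monotone (hmono.comp hg).monotone
    fun i j => add_pos (hpos (f i)) (hpos (g j))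
end

section
/- Let p_1 < p_2 < ... < p_n be positive real numbers. Then the n×n matrix C with (i,j) entry (p_i + p_j) · log(p_i + p_j) is conditionally positive definite. -/
open Matrix

/-!
For `1 < r < 2` the power `u ^ r` is a positive mixture, over `t > 0`, of the functions
`u / t - 1 + t / (t + u)`. At `u = pᵢ + pⱼ` the affine part has the form `aᵢ + aⱼ`, which the
condition `∑ xᵢ = 0` kills, and the rest is a multiple of the Cauchy matrix of the numbers
`pᵢ + t / 2`. Hence `[(pᵢ + pⱼ) ^ r]` is conditionally positive definite, and
`u log u = lim (u ^ (1 + r) - u) / r` as `r ↓ 0`.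
-/

open MeasureTheory Filter Topology Set

variable {ι : Type*}

section Integral

variable {α : Type*} [MeasurableSpace α] {μ : Measure α} {F : α → Matrix ι ι ℝ}

lemma dotProduct_integral_mulVec [Fintype ι] (hF : ∀ i j, Integrable (fun a ↦ F a i j) μ)
    (x y : ι → ℝ) :
    x ⬝ᵥ (of fun i j ↦ ∫ a, F a i j ∂μ) *ᵥ y = ∫ a, x ⬝ᵥ F a *ᵥ y ∂μ := by
  have hterm (i j : ι) : Integrable (fun a ↦ x i * (F a i j * y j)) μ :=
    ((hF i j).mul_const _).const_mul _
  simp only [dotProduct, mulVec, Finset.mul_sum, of_apply]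
  rw [integral_finsetSum _ fun i _ ↦ integrable_finsetSum _ fun j _ ↦ hterm i j]
  refine Finset.sum_congr rfl fun i _ ↦ ?_
  rw [integral_finsetSum _ fun j _ ↦ hterm i j]
  exact Finset.sum_congr rfl fun j _ ↦ by rw [integral_const_mul, integral_mul_const]

lemma posSemidef_integral [Finite ι] (hF : ∀ i j, Integrable (fun a ↦ F a i j) μ)
    (hpos : ∀ᵐ a ∂μ, (F a).PosSemidef) : (of fun i j ↦ ∫ a, F a i j ∂μ).PosSemidef := by
  have := Fintype.ofFinite ι
  refine .of_dotProduct_mulVec_nonneg (IsHermitian.ext fun i j ↦ ?_) fun x ↦ ?_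
  · exact integral_congr_ae (hpos.mono fun a ha ↦ ha.isHermitian.apply i j)
  · rw [dotProduct_integral_mulVec hF]
    exact integral_nonneg_of_ae (hpos.mono fun a ha ↦ ha.dotProduct_mulVec_nonneg x)

end Integral

/-- Cauchy matrices are Gram matrices of exponentials: `1 / (p + q) = ∫₀^∞ e^{-ps} e^{-qs} ds`. -/
lemma posSemidef_inv_add [Finite ι] {p : ι → ℝ} (hp : ∀ i, 0 < p i) :
    (of fun i j ↦ (p i + p j)⁻¹).PosSemidef := by
  let F (s : ℝ) : Matrix ι ι ℝ := of fun i j ↦ Real.exp (-(p i + p j) * s)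
  have hneg (i j : ι) : -(p i + p j) < 0 := neg_lt_zero.2 (add_pos (hp i) (hp j))
  have hF (s : ℝ) : (F s).PosSemidef := by
    have := Fintype.ofFinite ι
    convert posSemidef_vecMulVec_self_star fun i ↦ Real.exp (-p i * s)
    ext i j
    simp only [F, of_apply, vecMulVec_apply, star_trivial, ← Real.exp_add]
    ring_nf
  have hlaplace (i j : ι) : ∫ s in Ioi 0, F s i j = (p i + p j)⁻¹ :=
    (integral_exp_mul_Ioi (hneg i j) 0).trans
      (by rw [mul_zero, Real.exp_zero, neg_div_neg_eq, one_div])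
  simp only [← hlaplace]
  exact posSemidef_integral (fun i j ↦ integrableOn_exp_mul_Ioi (hneg i j) 0) (.of_forall hF)

/-- A real symmetric matrix is conditionally positive definite if its quadratic form is
nonnegative on the vectors whose coordinates sum to zero. -/
structure IsCondPosDef [Fintype ι] (S : Matrix ι ι ℝ) : Prop where
  isSymm : S.IsSymm
  dotProduct_mulVec_nonneg : ∀ x : ι → ℝ, ∑ i, x i = 0 → 0 ≤ x ⬝ᵥ S *ᵥ x

namespace IsCondPosDef

variable [Fintype ι] {S T : Matrix ι ι ℝ}

lemma of_posSemidef (hS : S.PosSemidef) : IsCondPosDef S where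
  isSymm := by simpa [IsSymm, IsHermitian] using hS.isHermitian
  dotProduct_mulVec_nonneg x _ := by simpa using hS.dotProduct_mulVec_nonneg x

protected lemma add (hS : IsCondPosDef S) (hT : IsCondPosDef T) : IsCondPosDef (S + T) where
  isSymm := hS.isSymm.add hT.isSymm
  dotProduct_mulVec_nonneg x hx := by
    rw [add_mulVec, dotProduct_add]
    exact add_nonneg (hS.dotProduct_mulVec_nonneg x hx) (hT.dotProduct_mulVec_nonneg x hx)

protected lemma smul (hS : IsCondPosDef S) {c : ℝ} (hc : 0 ≤ c) : IsCondPosDef (c • S) where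
  isSymm := hS.isSymm.smul c
  dotProduct_mulVec_nonneg x hx := by
    rw [smul_mulVec, dotProduct_smul]
    exact smul_nonneg hc (hS.dotProduct_mulVec_nonneg x hx)

protected lemma integral {α : Type*} [MeasurableSpace α] {μ : Measure α} {F : α → Matrix ι ι ℝ}
    (hF : ∀ i j, Integrable (fun a ↦ F a i j) μ) (hpos : ∀ᵐ a ∂μ, IsCondPosDef (F a)) :
    IsCondPosDef (of fun i j ↦ ∫ a, F a i j ∂μ) where
  isSymm := IsSymm.ext fun i j ↦ integral_congr_ae (hpos.mono fun _ ha ↦ ha.isSymm.apply i j)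
  dotProduct_mulVec_nonneg x hx := by
    rw [dotProduct_integral_mulVec hF]
    exact integral_nonneg_of_ae (hpos.mono fun _ ha ↦ ha.dotProduct_mulVec_nonneg x hx)

lemma of_tendsto {α : Type*} {l : Filter α} [l.NeBot] {F : α → Matrix ι ι ℝ}
    (hF : Tendsto F l (𝓝 S)) (hpos : ∀ᶠ a in l, IsCondPosDef (F a)) : IsCondPosDef S where
  isSymm := by
    have htranspose : Tendsto (fun a ↦ (F a)ᵀ) l (𝓝 Sᵀ) :=
      (continuous_id.matrix_transpose.tendsto S).comp hF
    exact tendsto_nhds_unique (htranspose.congr' (hpos.mono fun _ ha ↦ ha.isSymm)) hF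
  dotProduct_mulVec_nonneg x hx := by
    have hcont : Continuous fun A : Matrix ι ι ℝ ↦ x ⬝ᵥ A *ᵥ x := by fun_prop
    exact ge_of_tendsto ((hcont.tendsto S).comp hF)
      (hpos.mono fun _ ha ↦ ha.dotProduct_mulVec_nonneg x hx)

end IsCondPosDef

lemma isCondPosDef_add_apply [Fintype ι] (a : ι → ℝ) : IsCondPosDef (of fun i j ↦ a i + a j) where
  isSymm := IsSymm.ext fun i j ↦ add_comm (a j) (a i)
  dotProduct_mulVec_nonneg x hx := by
    have hmulVec : (of fun i j ↦ a i + a j) *ᵥ x = fun _ ↦ a ⬝ᵥ x := by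
      ext i
      simp [mulVec, dotProduct, add_mul, Finset.sum_add_distrib, ← Finset.mul_sum, hx]
    simp [hmulVec, dotProduct, ← Finset.sum_mul, hx]

lemma isCondPosDef_rpowIntegrand₁₂_add [Fintype ι] {p : ι → ℝ} (hp : ∀ i, 0 ≤ p i) (r : ℝ)
    {t : ℝ} (ht : 0 < t) :
    IsCondPosDef (of fun i j ↦ Real.rpowIntegrand₁₂ r t (p i + p j)) := by
  have hcauchy : IsCondPosDef (of fun i j ↦ ((p i + t / 2) + (p j + t / 2))⁻¹) :=
    .of_posSemidef (posSemidef_inv_add fun i ↦ add_pos_of_nonneg_of_pos (hp i) (half_pos ht))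
  convert ((hcauchy.smul ht.le).add (isCondPosDef_add_apply fun i ↦ t⁻¹ * p i - 1 / 2)).smul
    (Real.rpow_nonneg ht.le (r - 1))
  ext i j
  have hshift : (p i + t / 2) + (p j + t / 2) = t + (p i + p j) := by ring
  simp only [Real.rpowIntegrand₁₂, of_apply, Matrix.smul_apply, Matrix.add_apply, smul_eq_mul,
    hshift]
  ring

lemma isCondPosDef_add_rpow [Fintype ι] {p : ι → ℝ} (hp : ∀ i, 0 ≤ p i) {r : ℝ}
    (hr : r ∈ Ioo 1 2) :
    IsCondPosDef (of fun i j ↦ (p i + p j) ^ r) := by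
  obtain ⟨μ, hμ⟩ := Real.exists_measure_rpow_eq_integral_rpowIntegrand₁₂ hr
  have hsum (i j : ι) : p i + p j ∈ Ici 0 := add_nonneg (hp i) (hp j)
  simp only [fun i j ↦ (hμ _ (hsum i j)).2]
  exact .integral (F := fun t ↦ of fun i j ↦ Real.rpowIntegrand₁₂ r t (p i + p j))
    (fun i j ↦ (hμ _ (hsum i j)).1)
    (ae_restrict_of_forall_mem measurableSet_Ioi fun _ ↦ isCondPosDef_rpowIntegrand₁₂_add hp r)

lemma tendsto_inv_mul_rpow_one_add_sub_self {u : ℝ} (hu : 0 ≤ u) :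
    Tendsto (fun r : ℝ ↦ r⁻¹ * (u ^ (1 + r) - u)) (𝓝[>] 0) (𝓝 (u * Real.log u)) := by
  rcases hu.eq_or_lt with rfl | hu
  · refine tendsto_const_nhds.congr' (eventually_mem_nhdsWithin.mono fun r (hr : 0 < r) ↦ ?_)
    simp [Real.zero_rpow (by positivity : 1 + r ≠ 0)]
  · refine ((tendsto_rpow_sub_one_log hu).const_mul u).congr fun r ↦ ?_
    rw [Real.rpow_add hu, Real.rpow_one]
    ring

theorem stmt_5_general [Fintype ι] (p : ι → ℝ) (hp : ∀ i, 0 ≤ p i) :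
    IsCondPosDef (of fun i j ↦ (p i + p j) * Real.log (p i + p j)) := by
  let F (r : ℝ) : Matrix ι ι ℝ := r⁻¹ • ((of fun i j ↦ (p i + p j) ^ (1 + r)) +
    of fun i j ↦ -p i + -p j)
  have hF : ∀ᶠ r in 𝓝[>] 0, IsCondPosDef (F r) := by
    filter_upwards [Ioo_mem_nhdsGT one_pos] with r ⟨hr₀, hr₁⟩
    have hpow := isCondPosDef_add_rpow hp (r := 1 + r) ⟨by linarith, by linarith⟩
    exact (hpow.add (isCondPosDef_add_apply fun i ↦ -p i)).smul (inv_nonneg.2 hr₀.le)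
  refine .of_tendsto (tendsto_pi_nhds.2 fun i ↦ tendsto_pi_nhds.2 fun j ↦ ?_) hF
  refine (tendsto_inv_mul_rpow_one_add_sub_self (add_nonneg (hp i) (hp j))).congr fun r ↦ ?_
  simp only [F, Matrix.smul_apply, Matrix.add_apply, of_apply, smul_eq_mul]
  ring

/-- The matrix `[(pᵢ + pⱼ) log (pᵢ + pⱼ)]` is conditionally positive definite. -/
theorem stmt_5 (n : ℕ) (p : Fin n → ℝ) (hpos : ∀ i, 0 < p i) (hmono : StrictMono p)
    (x : Fin n → ℝ) (hx : ∑ i, x i = 0) :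
    0 ≤ x ⬝ᵥ (Matrix.of fun i j : Fin n =>
      (p i + p j) * Real.log (p i + p j)).mulVec x :=
  (stmt_5_general p fun i ↦ (hpos i).le).dotProduct_mulVec_nonneg x hx
end

section
/- Let p_1 < p_2 < ... < p_n be positive real numbers and let C be the n×n matrix with (i,j) entry (p_i + p_j) · log(p_i + p_j). Then ⟨x, Cx⟩ > 0 for every nonzero vector x ∈ ℝ^n with Σ_i x_i = 0. -/
open Matrix

/-!
Let `Q k` be the quadratic form of the matrix `[k (pᵢ + pⱼ)]`. Since `1 / s = ∫₀^∞ e^{-su} du`,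

  `Q (1 / s) = ∫₀^∞ (∑ᵢ xᵢ e^{-pᵢ u})² du > 0`,

because exponentials with distinct rates are linearly independent.

On vectors with `∑ xᵢ = 0` the form `Q` kills affine kernels, so subtracting the first-order Taylor
polynomial at `t` shows that both `Q (log (s + t))` and `Q ((s + t) log (s + t))` tend to zero as
`t → ∞`. In `t` the former has derivative `Q (1 / (s + t)) > 0`, hence it increases to zero and is
negative; the latter has derivative `Q (log (s + t)) < 0`, hence it decreases to zero and is
positive. At `t = 0` this is the claim.
-/

open Filter MeasureTheory Set Topology

theorem lt_of_strictAntiOn_Ici_of_tendsto {α β : Type*} [LinearOrder α] [NoMaxOrder α]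
    [TopologicalSpace β] [Preorder β] [OrderClosedTopology β] {f : α → β} {a : α} {l : β}
    (hf : StrictAntiOn f (Ici a)) (hlim : Tendsto f atTop (𝓝 l)) : l < f a := by
  obtain ⟨b, hab⟩ := exists_gt a
  have : Nonempty α := ⟨a⟩
  have hle : l ≤ f b := le_of_tendsto hlim <| by
    filter_upwards [eventually_ge_atTop b] with t hbt
    exact hf.antitoneOn hab.le (hab.le.trans hbt) hbt
  exact hle.trans_lt (hf self_mem_Ici hab.le hab)

theorem lt_of_hasDerivAt_neg_of_tendsto {f f' : ℝ → ℝ} {a l : ℝ}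
    (hderiv : ∀ t ≥ a, HasDerivAt f (f' t) t) (hneg : ∀ t > a, f' t < 0)
    (hlim : Tendsto f atTop (𝓝 l)) : l < f a := by
  refine lt_of_strictAntiOn_Ici_of_tendsto (strictAntiOn_of_deriv_neg (convex_Ici a)
    (fun t ht => (hderiv t ht).continuousAt.continuousWithinAt) fun t ht => ?_) hlim
  rw [interior_Ici] at ht
  exact (hderiv t ht.le).deriv ▸ hneg t ht

theorem tendsto_add_mul_log_sub_taylor (s : ℝ) :
    Tendsto (fun t : ℝ => (s + t) * Real.log (s + t) - ((Real.log t + 1) * s + t * Real.log t))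
      atTop (𝓝 0) := by
  have hlog : Tendsto (fun t : ℝ => Real.log (t + s) - Real.log t) atTop (𝓝 0) :=
    Real.tendsto_log_comp_add_sub_log s
  have hmul := ((Real.tendsto_mul_log_one_add_div_atTop s).add (hlog.const_mul s)).sub_const s
  simp only [mul_zero, add_zero, sub_self] at hmul
  refine hmul.congr' ?_
  filter_upwards [eventually_gt_atTop 0, eventually_gt_atTop (-s)] with t ht hst
  rw [one_add_div ht.ne', Real.log_div (by linarith) ht.ne', add_comm t s]
  ring

theorem linearIndependent_fun_pow {ι R : Type*} [CommRing R] [IsDomain R] {z : ι → R}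
    (hz : Function.Injective z) : LinearIndependent R fun i (m : ℕ) => z i ^ m :=
  (linearIndependent_monoidHom (Multiplicative ℕ) R).comp (fun i => powersHom R (z i))
    ((powersHom R).injective.comp hz)

section HankelForm

variable {ι : Type*} [Fintype ι]

/-- The value at `x` of the quadratic form of the Hankel-type matrix `[k (pᵢ + pⱼ)]`. -/
noncomputable def hankelForm (k : ℝ → ℝ) (p x : ι → ℝ) : ℝ :=
  x ⬝ᵥ (Matrix.of fun i j => k (p i + p j)) *ᵥ x

theorem hankelForm_eq_sum (k : ℝ → ℝ) (p x : ι → ℝ) :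
    hankelForm k p x = ∑ i, ∑ j, x i * x j * k (p i + p j) := by
  simp only [hankelForm, dotProduct, mulVec, of_apply, Finset.mul_sum]
  exact Finset.sum_congr rfl fun i _ => Finset.sum_congr rfl fun j _ => by ring

theorem hankelForm_neg (k : ℝ → ℝ) (p x : ι → ℝ) :
    hankelForm (fun s => -k s) p x = -hankelForm k p x := by
  simp only [hankelForm_eq_sum, mul_neg, Finset.sum_neg_distrib]

theorem hankelForm_comp_add_right (k : ℝ → ℝ) (p x : ι → ℝ) (t : ℝ) :
    hankelForm (fun s => k (s + t)) p x = hankelForm k (fun i => p i + t / 2) x := by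
  have hshift (i j : ι) : p i + t / 2 + (p j + t / 2) = p i + p j + t := by ring
  simp only [hankelForm, hshift]

theorem hankelForm_add_affine (k : ℝ → ℝ) (p : ι → ℝ) {x : ι → ℝ} (hx : ∑ i, x i = 0)
    (a b : ℝ) :
    hankelForm (fun s => k s + (a * s + b)) p x = hankelForm k p x := by
  have hsplit (i j : ι) : x i * x j * (k (p i + p j) + (a * (p i + p j) + b)) =
      x i * x j * k (p i + p j) + (x i * (a * p i + b) * x j + x i * (x j * (a * p j))) := by
    ring
  simp only [hankelForm_eq_sum, hsplit, Finset.sum_add_distrib, ← Finset.mul_sum,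
    ← Finset.sum_mul, hx, mul_zero, zero_mul, Finset.sum_const_zero, add_zero]

variable {p x : ι → ℝ} {k k' : ℝ → ℝ}

theorem hasDerivAt_hankelForm_comp_add {t : ℝ}
    (hk : ∀ i j, HasDerivAt k (k' (p i + p j + t)) (p i + p j + t)) :
    HasDerivAt (fun t => hankelForm (fun s => k (s + t)) p x)
      (hankelForm (fun s => k' (s + t)) p x) t := by
  simp only [hankelForm_eq_sum]
  exact HasDerivAt.fun_sum fun i _ => HasDerivAt.fun_sum fun j _ =>
    ((hk i j).comp_const_add _ _).const_mul _

theorem tendsto_hankelForm_comp_add_zero (hx : ∑ i, x i = 0) {a b : ℝ → ℝ}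
    (hk : ∀ i j, Tendsto (fun t => k (p i + p j + t) - (a t * (p i + p j) + b t)) atTop (𝓝 0)) :
    Tendsto (fun t => hankelForm (fun s => k (s + t)) p x) atTop (𝓝 0) := by
  have hsub (t : ℝ) : hankelForm (fun s => k (s + t) - (a t * s + b t)) p x =
      hankelForm (fun s => k (s + t)) p x := by
    simpa only [sub_add_cancel] using
      (hankelForm_add_affine (fun s => k (s + t) - (a t * s + b t)) p hx (a t) (b t)).symm
  simp only [← hsub, hankelForm_eq_sum]
  simpa only [mul_zero, Finset.sum_const_zero] using tendsto_finsetSum Finset.univ fun i _ =>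
    tendsto_finsetSum Finset.univ fun j _ => (hk i j).const_mul (x i * x j)

theorem hankelForm_pos_of_hasDerivAt (hp : ∀ i, 0 < p i)
    (hk : ∀ s > 0, HasDerivAt k (k' s) s)
    (hneg : ∀ t > 0, hankelForm k' (fun i => p i + t) x < 0)
    (hlim : Tendsto (fun t => hankelForm (fun s => k (s + t)) p x) atTop (𝓝 0)) :
    0 < hankelForm k p x := by
  have hpos : 0 < hankelForm (fun s => k (s + 0)) p x :=
    lt_of_hasDerivAt_neg_of_tendsto (f := fun t => hankelForm (fun s => k (s + t)) p x)
      (fun t ht => hasDerivAt_hankelForm_comp_add fun i j =>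
        hk _ (add_pos_of_pos_of_nonneg (add_pos (hp i) (hp j)) ht))
      (fun t ht => by rw [hankelForm_comp_add_right]; exact hneg _ (half_pos ht)) hlim
  simpa only [add_zero] using hpos

theorem exists_pos_sum_mul_exp_ne_zero (hp : Function.Injective p) (hx : x ≠ 0) :
    ∃ u > 0, ∑ i, x i * Real.exp (p i * u) ≠ 0 := by
  by_contra! hzero
  have hpow (i : ι) (m : ℕ) :
      x i * Real.exp (p i) * Real.exp (p i) ^ m = x i * Real.exp (p i * (m + 1)) := by
    rw [mul_assoc, ← pow_succ', ← Real.exp_nat_mul, Nat.cast_succ, mul_comm (p i)]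
  have hsum : ∑ i, (x i * Real.exp (p i)) • (fun m : ℕ => Real.exp (p i) ^ m) = 0 := by
    funext m
    simpa [hpow] using hzero (m + 1) (by positivity)
  have hli : LinearIndependent ℝ fun i (m : ℕ) => Real.exp (p i) ^ m :=
    linearIndependent_fun_pow (Real.exp_injective.comp hp)
  have hcoeff := Fintype.linearIndependent_iff.mp hli _ hsum
  exact hx (funext fun i => (mul_eq_zero_iff_right (Real.exp_ne_zero _)).mp (hcoeff i))

theorem sq_sum_mul_exp (p x : ι → ℝ) (u : ℝ) : (∑ i, x i * Real.exp (-p i * u)) ^ 2 =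
    hankelForm (fun s => Real.exp (-s * u)) p x := by
  rw [hankelForm_eq_sum, sq, Finset.sum_mul_sum]
  refine Finset.sum_congr rfl fun i _ => Finset.sum_congr rfl fun j _ => ?_
  rw [mul_mul_mul_comm, ← Real.exp_add]
  ring_nf

theorem integrableOn_hankelForm_exp (hp : ∀ i, 0 < p i) :
    IntegrableOn (fun u => hankelForm (fun s => Real.exp (-s * u)) p x) (Ioi 0) := by
  simp only [hankelForm_eq_sum]
  exact integrable_finsetSum _ fun i _ => integrable_finsetSum _ fun j _ =>
    (integrableOn_exp_mul_Ioi (neg_lt_zero.mpr (add_pos (hp i) (hp j))) 0).const_mul _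

theorem integral_hankelForm_exp (hp : ∀ i, 0 < p i) :
    ∫ u in Ioi 0, hankelForm (fun s => Real.exp (-s * u)) p x = hankelForm (fun s => s⁻¹) p x := by
  have hneg (i j : ι) : -(p i + p j) < 0 := neg_lt_zero.mpr (add_pos (hp i) (hp j))
  have hint (i j : ι) := (integrableOn_exp_mul_Ioi (hneg i j) 0).const_mul (x i * x j)
  simp only [hankelForm_eq_sum]
  rw [integral_finsetSum _ fun i _ => integrable_finsetSum _ fun j _ => hint i j]
  refine Finset.sum_congr rfl fun i _ => ?_
  rw [integral_finsetSum _ fun j _ => hint i j]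
  refine Finset.sum_congr rfl fun j _ => ?_
  rw [integral_const_mul, integral_exp_mul_Ioi (hneg i j), mul_zero, Real.exp_zero, neg_div_neg_eq,
    one_div]

theorem hankelForm_inv_pos (hp : ∀ i, 0 < p i) (hinj : Function.Injective p) (hx : x ≠ 0) :
    0 < hankelForm (fun s => s⁻¹) p x := by
  obtain ⟨u, hu, hne⟩ := exists_pos_sum_mul_exp_ne_zero (neg_injective.comp hinj) hx
  have hint := integrableOn_hankelForm_exp (x := x) hp
  rw [← integral_hankelForm_exp hp]
  simp only [← sq_sum_mul_exp] at hint ⊢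
  rw [setIntegral_pos_iff_support_of_nonneg_ae (ae_of_all _ fun u => sq_nonneg _) hint]
  have hopen : IsOpen (Function.support (fun u => (∑ i, x i * Real.exp (-p i * u)) ^ 2) ∩ Ioi 0) :=
    (Continuous.isOpen_support (by fun_prop)).inter isOpen_Ioi
  exact hopen.measure_pos volume ⟨u, pow_ne_zero 2 hne, hu⟩

theorem hankelForm_neg_log_pos (hp : ∀ i, 0 < p i) (hinj : Function.Injective p)
    (hx : ∑ i, x i = 0) (hx0 : x ≠ 0) : 0 < hankelForm (fun s => -Real.log s) p x := by
  refine hankelForm_pos_of_hasDerivAt (k' := fun s => -s⁻¹) hp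
    (fun s hs => (Real.hasDerivAt_log hs.ne').fun_neg) (fun t ht => ?_)
    (tendsto_hankelForm_comp_add_zero (k := fun s => -Real.log s)
      (a := 0) (b := fun t => -Real.log t) hx fun i j => ?_)
  · rw [hankelForm_neg, neg_lt_zero]
    exact hankelForm_inv_pos (fun i => add_pos (hp i) ht)
      ((add_left_injective t).comp hinj) hx0
  · simpa [add_comm, ← sub_eq_add_neg] using (Real.tendsto_log_comp_add_sub_log (p i + p j)).neg

end HankelForm

theorem stmt_6_general {ι : Type*} [Fintype ι] {p x : ι → ℝ} (hp : ∀ i, 0 < p i)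
    (hinj : Function.Injective p) (hx : ∑ i, x i = 0) (hx0 : x ≠ 0) :
    0 < x ⬝ᵥ (Matrix.of fun i j => (p i + p j) * Real.log (p i + p j)) *ᵥ x := by
  change 0 < hankelForm (fun s => s * Real.log s) p x
  refine hankelForm_pos_of_hasDerivAt (k' := fun s => Real.log s + 1) hp
    (fun s hs => Real.hasDerivAt_mul_log hs.ne') (fun t ht => ?_)
    (tendsto_hankelForm_comp_add_zero (k := fun s => s * Real.log s) hx fun i j =>
      tendsto_add_mul_log_sub_taylor (p i + p j))
  have hlog : 0 < hankelForm (fun s => -Real.log s) (fun i => p i + t) x :=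
    hankelForm_neg_log_pos (fun i => add_pos (hp i) ht)
      ((add_left_injective t).comp hinj) hx hx0
  have haffine := hankelForm_add_affine Real.log (fun i => p i + t) hx 0 1
  simp only [zero_mul, zero_add] at haffine
  rw [haffine]
  rwa [hankelForm_neg, neg_pos] at hlog

/-- The quadratic form of `C = [(pᵢ + pⱼ) log (pᵢ + pⱼ)]` is strictly positive on
nonzero vectors whose coordinates sum to zero. -/
theorem stmt_6 (n : ℕ) (p : Fin n → ℝ) (hpos : ∀ i, 0 < p i) (hmono : StrictMono p)
    (x : Fin n → ℝ) (hx : ∑ i, x i = 0) (hx0 : x ≠ 0) :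
    0 < x ⬝ᵥ (Matrix.of fun i j : Fin n =>
      (p i + p j) * Real.log (p i + p j)).mulVec x :=
  stmt_6_general hpos hmono.injective hx hx0
end
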